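/- arXiv:2104.01354 — 2 statements merged into one kernel-verified Lean document; each statement's English description precedes it below -/
import Mathlib

section
/- Let α ≤ β ≤ −1 be negative integers, let N be a real number that is not a nonpositive integer, and let M = (M_i)_{i≥0} be real parameters with M_i ∉ {0,1}. Then for every integer f with −α ≤ f ≤ −α−β−1, the limit lim_{s→0} (1/s)·h_f^{α+s/M_{α+f}, β−s, N}(x) exists for every x, and Ĥ_f^{α,β,N;M}(x) = (M_{α+f}/(M_{α+f}−1)) · lim_{s→0} (1/s)·h_f^{α+s/M_{α+f}, β−s, N}(x). -/
open Finset MeasureTheory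

noncomputable section ExceptionalHahnJacobi

/-- Pochhammer symbol `(z)_m = z (z+1) ⋯ (z+m-1)`. -/
def poch (z : ℝ) (m : ℕ) : ℝ := ∏ i ∈ Finset.range m, (z + (i : ℝ))

/-- Pochhammer symbol with integer exponent; `(z)_{-k} = 1 / ((z-1)(z-2)⋯(z-k))`. -/
def pochZ (z : ℝ) (m : ℤ) : ℝ :=
  if 0 ≤ m then poch z m.toNat else 1 / poch (z - ((-m).toNat : ℝ)) (-m).toNat

/-- Generalized binomial coefficient `C(z, k) = z(z-1)⋯(z-k+1)/k!`. -/
def genBinom (z : ℝ) (k : ℕ) : ℝ := (∏ i ∈ Finset.range k, (z - (i : ℝ))) / (k.factorial : ℝ)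

/-- `λ^{a,b}(x) = x (x + a + b + 1)`. -/
def lam (a b x : ℝ) : ℝ := x * (x + a + b + 1)

/-- Hahn polynomial `h_n^{a,b,N}(x)`. -/
def hahn (a b N : ℝ) (n : ℕ) (x : ℝ) : ℝ :=
  ∑ j ∈ Finset.range (n + 1),
    poch (-(n : ℝ)) j * poch (a + b + (n : ℝ) + 1) j * poch (-N + (j : ℝ)) (n - j) *
      poch (a + (j : ℝ) + 1) (n - j) * poch (-x) j / (j.factorial : ℝ)

/-- Dual Hahn polynomial `R_n^{a,b,N}(x)`. -/
def dualHahn (a b N : ℝ) (n : ℕ) (x : ℝ) : ℝ :=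
  ∑ j ∈ Finset.range (n + 1),
    poch (-(n : ℝ)) j * poch (-N + (j : ℝ)) (n - j) * poch (a + (j : ℝ) + 1) (n - j) /
        ((n.factorial : ℝ) * (-1 : ℝ) ^ j * (j.factorial : ℝ)) *
      ∏ i ∈ Finset.range j, (x - (i : ℝ) * (a + b + 1 + (i : ℝ)))

/-- Dual Hahn polynomial with integer degree; zero for negative degree. -/
def dualHahnZ (a b N : ℝ) (m : ℤ) (x : ℝ) : ℝ :=
  if 0 ≤ m then dualHahn a b N m.toNat x else 0

/-- Jacobi polynomial `P_n^{a,b}(x)`. -/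
def jacobiP (a b : ℝ) (n : ℕ) (x : ℝ) : ℝ :=
  (2 : ℝ)⁻¹ ^ n * ∑ j ∈ Finset.range (n + 1),
    genBinom ((n : ℝ) + a) j * genBinom ((n : ℝ) + b) (n - j) * (x - 1) ^ (n - j) * (x + 1) ^ j

/-- The function `φ_u^{α,β,N}(s,x)`, a normalized terminating ₃F₂. -/
def phiH (α β : ℤ) (N : ℝ) (u : ℕ) (s x : ℝ) : ℝ :=
  poch ((α : ℝ) + 1) (max u (-α - β - (u : ℤ) - 1).toNat) *
    poch (-N) (max u (-α - β - (u : ℤ) - 1).toNat) *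
    ∑ j ∈ Finset.range (u + 1),
      poch (-(u : ℝ)) j * poch ((u : ℝ) - s + (α : ℝ) + (β : ℝ) + 1) j * poch (-x) j /
        (poch ((α : ℝ) - s + 1) j * poch (-N) j * (j.factorial : ℝ))

/-- The polynomials `Ĥ_n^{α,β,N;M}(x)`. -/
def Hhat (α β : ℤ) (N : ℝ) (M : ℕ → ℝ) (n : ℕ) (x : ℝ) : ℝ :=
  if ⌈((-α - β : ℤ) : ℚ) / 2⌉ ≤ (n : ℤ) ∧ (n : ℤ) ≤ -α - 1 then
    deriv (fun s => phiH α β N n s x) 0 -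
      deriv (fun s => phiH α β N (-α - β - (n : ℤ) - 1).toNat s x) 0
  else if -α ≤ (n : ℤ) ∧ (n : ℤ) ≤ -α - β - 1 then
    (-1 : ℝ) ^ ((β : ℤ) + (n : ℤ)) * ((β + (n : ℤ)).toNat.factorial : ℝ) *
      (((-α - β - (n : ℤ) - 1).toNat.factorial : ℝ) * poch (-x) (-α).toNat *
          hahn (-(α : ℝ)) (β : ℝ) ((α : ℝ) + N) ((α + (n : ℤ)).toNat) (x + (α : ℝ)) +
        (((α + (n : ℤ)).toNat.factorial : ℝ)) *
            poch (-N - (α : ℝ) - (β : ℝ) - (n : ℝ) - 1) (2 * (n : ℤ) + α + β + 1).toNat /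
            (M ((α + (n : ℤ)).toNat) - 1) *
          hahn (α : ℝ) (β : ℝ) N ((-α - β - (n : ℤ) - 1).toNat) x)
  else hahn (α : ℝ) (β : ℝ) N n x

/-- The function `φ_u^{α,β}(s,x)`, a normalized terminating ₂F₁. -/
def phiJ (α β : ℤ) (u : ℕ) (s x : ℝ) : ℝ :=
  poch ((α : ℝ) + 1) (max u (-α - β - (u : ℤ) - 1).toNat) /
      ((max u.factorial (-α - β - (u : ℤ) - 1).toNat.factorial : ℕ) : ℝ) *
    ∑ j ∈ Finset.range (u + 1),
      poch (-(u : ℝ)) j * poch ((u : ℝ) - s + (α : ℝ) + (β : ℝ) + 1) j /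
          (poch ((α : ℝ) - s + 1) j * (j.factorial : ℝ)) * ((1 - x) / 2) ^ j

/-- The polynomials `P̂_n^{α,β;M}(x)`. -/
def Phat (α β : ℤ) (M : ℕ → ℝ) (n : ℕ) (x : ℝ) : ℝ :=
  if ⌈((-α - β : ℤ) : ℚ) / 2⌉ ≤ (n : ℤ) ∧ (n : ℤ) ≤ -α - 1 then
    deriv (fun s => phiJ α β n s x) 0 -
      deriv (fun s => phiJ α β (-α - β - (n : ℤ) - 1).toNat s x) 0
  else if -α ≤ (n : ℤ) ∧ (n : ℤ) ≤ -α - β - 1 then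
    (-1 : ℝ) ^ ((β : ℤ) + (n : ℤ)) *
      ((((n : ℤ) + α).toNat.factorial : ℝ) * (((n : ℤ) + β).toNat.factorial : ℝ) *
        ((-α - β - (n : ℤ) - 1).toNat.factorial : ℝ)) / (n.factorial : ℝ) *
      ((M ((α + (n : ℤ)).toNat) - 1)⁻¹ * jacobiP (α : ℝ) (β : ℝ) ((-α - β - (n : ℤ) - 1).toNat) x +
        ((1 - x) / 2) ^ (-α).toNat * jacobiP (-(α : ℝ)) (β : ℝ) ((α + (n : ℤ)).toNat) x)
  else jacobiP (α : ℝ) (β : ℝ) n x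

/-- `u_F = Σ_{f ∈ F} f - C(n_F + 1, 2)`. -/
def uF (F : Finset ℕ) : ℕ := (∑ f ∈ F, f) - (F.card + 1).choose 2

/-- `n ∈ σ_F = {u_F, u_F + 1, …} \ {u_F + f : f ∈ F}`. -/
def inSigma (F : Finset ℕ) (n : ℕ) : Prop := uF F ≤ n ∧ n - uF F ∉ F

/-- The `i`-th element of `F` in increasing order. -/
def elemOf (F : Finset ℕ) (i : Fin F.card) : ℕ := ((F.orderIsoOfFin rfl i : {x // x ∈ F}) : ℕ)

/-- The `i`-th element of a finite set of integers, in increasing order. -/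
def elemOfZ (S : Finset ℤ) (i : Fin S.card) : ℤ := ((S.orderIsoOfFin rfl i : {x // x ∈ S}) : ℤ)

/-- Exceptional Hahn polynomial `h_n^{α,β,N;M,F}(x)`. -/
def exHahn (α β : ℤ) (N : ℝ) (M : ℕ → ℝ) (F : Finset ℕ) (n : ℕ) (x : ℝ) : ℝ :=
  Matrix.det (Matrix.of fun i j : Fin (F.card + 1) =>
    Fin.cases (Hhat α β N M (n - uF F) (x + ((j : ℕ) : ℝ)))
      (fun k => Hhat α β N M (elemOf F k) (x + ((j : ℕ) : ℝ))) i)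

/-- The polynomial `Ω_{M,F}^{α,β,N}(x)`. -/
def OmegaH (α β : ℤ) (N : ℝ) (M : ℕ → ℝ) (F : Finset ℕ) (x : ℝ) : ℝ :=
  Matrix.det (Matrix.of fun i j : Fin F.card =>
    Hhat α β N M (elemOf F i) (x + ((j : ℕ) : ℝ)))

/-- The polynomial `Λ_{M,F}^{α,β,N}(x)` (columns `j ∈ {1,…,n_F+1}`, `j ≠ n_F`). -/
def LambdaH (α β : ℤ) (N : ℝ) (M : ℕ → ℝ) (F : Finset ℕ) (x : ℝ) : ℝ :=
  Matrix.det (Matrix.of fun i j : Fin F.card =>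
    Hhat α β N M (elemOf F i)
      (x + ((if (j : ℕ) = F.card - 1 then F.card else (j : ℕ) : ℕ) : ℝ)))

/-- Exceptional Jacobi polynomial `P_n^{α,β;M,F}(x)`. -/
def exJacobi (α β : ℤ) (M : ℕ → ℝ) (F : Finset ℕ) (n : ℕ) (x : ℝ) : ℝ :=
  Matrix.det (Matrix.of fun i j : Fin (F.card + 1) =>
    Fin.cases (iteratedDeriv (j : ℕ) (Phat α β M (n - uF F)) x)
      (fun k => iteratedDeriv (j : ℕ) (Phat α β M (elemOf F k)) x) i)

/-- The polynomial `Ω_{M,F}^{α,β}(x)`. -/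
def OmegaJ (α β : ℤ) (M : ℕ → ℝ) (F : Finset ℕ) (x : ℝ) : ℝ :=
  Matrix.det (Matrix.of fun i j : Fin F.card =>
    iteratedDeriv (j : ℕ) (Phat α β M (elemOf F i)) x)

/-- `F_ext = F \ {-β, …, -α-β-1}`. -/
def Fext (α β : ℤ) (F : Finset ℕ) : Finset ℕ :=
  F.filter fun f : ℕ => ((f : ℤ) < -β ∨ -α - β ≤ (f : ℤ))

/-- Admissibility of the data `α, β, M, F`. -/
def IsAdmissible (α β : ℤ) (M : ℕ → ℝ) (F : Finset ℕ) : Prop :=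
  (∀ i : ℕ, (i : ℤ) ≤ -β - 1 → (∀ f ∈ F, (i : ℤ) ≠ -β - (f : ℤ) - 1) →
      Real.sign (M i) =
        Real.sign (∏ f ∈ Fext α β F, (((i : ℝ) - (f : ℝ) - (α : ℝ)) * ((i : ℝ) + (f : ℝ) + (β : ℝ) + 1)))) ∧
  (∀ x : ℤ, 0 ≤ x → (∃ f ∈ F, x ≤ (f : ℤ) + α + β) →
      0 ≤ ∏ f ∈ F.filter (fun f : ℕ => -α - β ≤ (f : ℤ)), (x - (f : ℤ) - α - β))

/-- `U_{F-} = {f + α + β : f ∈ F, 1 ≤ f ≤ -β-1}`. -/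
def UFm (α β : ℤ) (F : Finset ℕ) : Finset ℤ :=
  (F.filter fun f : ℕ => (1 ≤ f ∧ (f : ℤ) ≤ -β - 1)).image fun f : ℕ => (f : ℤ) + α + β

/-- `U_{F+} = {f + α + β : f ∈ F, f ≥ -α-β}`. -/
def UFp (α β : ℤ) (F : Finset ℕ) : Finset ℤ :=
  (F.filter fun f : ℕ => -α - β ≤ (f : ℤ)).image fun f : ℕ => (f : ℤ) + α + β

/-- `U_F = U_{F-} ∪ U_{F+}`. -/
def UF (α β : ℤ) (F : Finset ℕ) : Finset ℤ := UFm α β F ∪ UFp α β F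

/-- The weight of the measure `ω_{α,β,N}^{M,F}` at the point `x`. -/
def wH (α β : ℤ) (N : ℕ) (M : ℕ → ℝ) (F : Finset ℕ) (x : ℕ) : ℝ :=
  genBinom ((α : ℝ) + (F.card : ℝ) + (x : ℝ)) x *
      genBinom ((β : ℝ) + (N : ℝ) - (x : ℝ)) (N - F.card - x) /
    (OmegaH α β (N : ℝ) M F (x : ℝ) * OmegaH α β (N : ℝ) M F ((x : ℝ) + 1))

/-- The weight `ω_{α,β;M,F}(x)` on `[-1,1]`. -/
def wJ (α β : ℤ) (M : ℕ → ℝ) (F : Finset ℕ) (x : ℝ) : ℝ :=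
  (1 - x) ^ (α + (F.card : ℤ)) * (1 + x) ^ (β + (F.card : ℤ)) / (OmegaJ α β M F x) ^ 2

/-- The measure on `[-1,1]` with density `ω_{α,β;M,F}`. -/
def jacobiMeasure (α β : ℤ) (M : ℕ → ℝ) (F : Finset ℕ) : Measure ℝ :=
  (volume.restrict (Set.Icc (-1 : ℝ) 1)).withDensity fun x => ENNReal.ofReal (wJ α β M F x)

/-- Mass of the dual Hahn measure `ρ_{b,a,N̂}` at `λ^{a,b}(x)`. -/
def rhoMass (a b Nh : ℤ) (x : ℕ) : ℝ :=
  (2 * (x : ℝ) + (a : ℝ) + (b : ℝ) + 1) * poch ((b : ℝ) + 1) x * poch (-(Nh : ℝ)) x *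
      (Nh.toNat.factorial : ℝ) /
    ((-1 : ℝ) ^ x * poch ((x : ℝ) + (a : ℝ) + (b : ℝ) + 1) (Nh + 1).toNat *
      poch ((a : ℝ) + 1) x * (x.factorial : ℝ))

/-- Mass of the measure `ν_{a,b,N̂}^{M}` at `λ^{a,b}(s)`. -/
def nuMass (a b Nh : ℤ) (M : ℕ → ℝ) (s : ℤ) : ℝ :=
  if -b ≤ s ∧ s ≤ -1 then
    (2 * (s : ℝ) + (a : ℝ) + (b : ℝ) + 1) * poch ((Nh : ℝ) + 1 - (s : ℝ)) (s + b).toNat /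
        poch ((Nh : ℝ) + (b : ℝ) + 1) (s + a + 1).toNat * M ((s + b).toNat)
  else if 0 ≤ s ∧ s ≤ Nh then
    poch ((Nh : ℝ) + 1) b.toNat ^ 2 / poch ((b : ℝ) + 1) (a - b).toNat * rhoMass a b Nh s.toNat /
      ∏ i ∈ Finset.range b.toNat, (((s : ℝ) + (a : ℝ) + (i : ℝ) + 1) * ((s : ℝ) + (b : ℝ) - (i : ℝ)))
  else 0

/-- `ζ_v` (defined for any integer `v` via `pochZ`). -/
def zetaH (α β : ℤ) (N : ℝ) (v : ℤ) : ℝ :=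
  pochZ (-N - (α : ℝ) - (β : ℝ)) v * poch ((v : ℝ) + 1) (-α).toNat *
    ((v - α - β).toNat.factorial : ℝ)

/-- `θ_v^M`. -/
def thetaM (β : ℤ) (M : ℕ → ℝ) (v : ℕ) : ℝ :=
  if (v : ℤ) ≤ -β - 1 then 1 - M ((-β - 1 - (v : ℤ)).toNat) else 1

/-- `τ_v = ∏_{u ∈ U_F} (λ^{a,b}(v+α+β) - λ^{a,b}(u))` with `a = -α`, `b = -β`. -/
def tauH (α β : ℤ) (F : Finset ℕ) (v : ℕ) : ℝ :=
  ∏ u ∈ UF α β F,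
    (lam ((-α : ℤ) : ℝ) ((-β : ℤ) : ℝ) ((v : ℝ) + (α : ℝ) + (β : ℝ)) -
      lam ((-α : ℤ) : ℝ) ((-β : ℤ) : ℝ) ((u : ℤ) : ℝ))

/-- `ξ_n`. -/
def xiH (α β : ℤ) (N : ℝ) (F : Finset ℕ) (n : ℕ) : ℝ :=
  pochZ (N - (n : ℝ) + 1) ((n : ℤ) + α + β) ^ (α + (F.card : ℤ) + 1) *
    ∏ j ∈ Finset.range (F.card + 1), poch (N - (n : ℝ) - (j : ℝ) + 1) j

/-- `κ_M`. -/
def kappaM (α β : ℤ) (N : ℝ) (M : ℕ → ℝ) (F : Finset ℕ) : ℝ :=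
  (∏ u ∈ UFm α β F, (1 - M ((-u + α - 1).toNat))) * ∏ u ∈ UF α β F, zetaH α β N u

/-- Entry `(i,j)` (0-based) of the determinant defining `q_n^{a,b,N̂;M,U_F}`. -/
def qEntry (α β : ℤ) (N : ℝ) (M : ℕ → ℝ) (F : Finset ℕ) (n : ℕ) (x : ℝ) (i j : ℕ) : ℝ :=
  if i = 0 then
    (-1 : ℝ) ^ j * dualHahnZ (((-α).toNat : ℝ)) (((-β).toNat : ℝ)) (N + (α : ℝ) + (β : ℝ))
      ((n : ℤ) - (-α).toNat + j) x
  else if h1 : i - 1 < (UFm α β F).card then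
    (-1 : ℝ) ^ j * dualHahnZ (((-α).toNat : ℝ)) (((-β).toNat : ℝ)) (N + (α : ℝ) + (β : ℝ))
      ((n : ℤ) - (-α).toNat + j)
      (lam (((-α).toNat : ℝ)) (((-β).toNat : ℝ)) ((elemOfZ (UFm α β F) ⟨i - 1, h1⟩ : ℤ) : ℝ))
  else if i - 1 - (UFm α β F).card < (-α).toNat then
    poch (((-α).toNat : ℝ) + ((-β).toNat : ℝ) + (N + (α : ℝ) + (β : ℝ)) - (n : ℝ) - (j : ℝ) + 1) j *
      Hhat α β (-2 - (N + (α : ℝ) + (β : ℝ))) M ((-β).toNat + (i - 1 - (UFm α β F).card))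
        (-(n : ℝ) + ((-α).toNat : ℝ) - (j : ℝ) - 1)
  else if h3 : i - 1 - (UFm α β F).card - (-α).toNat < (UFp α β F).card then
    (-1 : ℝ) ^ j * dualHahnZ (((-α).toNat : ℝ)) (((-β).toNat : ℝ)) (N + (α : ℝ) + (β : ℝ))
      ((n : ℤ) - (-α).toNat + j)
      (lam (((-α).toNat : ℝ)) (((-β).toNat : ℝ))
        ((elemOfZ (UFp α β F) ⟨i - 1 - (UFm α β F).card - (-α).toNat, h3⟩ : ℤ) : ℝ))
  else 0

/-- The Krall dual Hahn orthogonal polynomial `q_n^{a,b,N̂;M,U_F}(x)`. -/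
def qKrall (α β : ℤ) (N : ℝ) (M : ℕ → ℝ) (F : Finset ℕ) (n : ℕ) (x : ℝ) : ℝ :=
  Matrix.det (Matrix.of fun i j : Fin (1 + (UFm α β F).card + (-α).toNat + (UFp α β F).card) =>
      qEntry α β N M F n x (i : ℕ) (j : ℕ)) /
    ((-1 : ℝ) ^ ((n + (-α).toNat + (-β).toNat) * ((UF α β F).card + 1) +
        ((-α).toNat + (-β).toNat).choose 2 + ((-β).toNat).choose 2 + (-α).toNat) *
      ∏ u ∈ UF α β F, (x - lam (((-α).toNat : ℝ)) (((-β).toNat : ℝ)) ((u : ℤ) : ℝ)))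

/-- Row used in the renormalized determinant `P̄`: for `-α ≤ g ≤ -α-β-1` it is
`(M_{α+g} - 1) · P̂_g` written without the division by `M_{α+g} - 1`. -/
def PhatBarRow (α β : ℤ) (M : ℕ → ℝ) (g : ℕ) (x : ℝ) : ℝ :=
  if -α ≤ (g : ℤ) ∧ (g : ℤ) ≤ -α - β - 1 then
    (-1 : ℝ) ^ ((β : ℤ) + (g : ℤ)) *
      ((((g : ℤ) + α).toNat.factorial : ℝ) * (((g : ℤ) + β).toNat.factorial : ℝ) *
        ((-α - β - (g : ℤ) - 1).toNat.factorial : ℝ)) / (g.factorial : ℝ) *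
      (jacobiP (α : ℝ) (β : ℝ) ((-α - β - (g : ℤ) - 1).toNat) x +
        (M ((α + (g : ℤ)).toNat) - 1) * ((1 - x) / 2) ^ (-α).toNat *
          jacobiP (-(α : ℝ)) (β : ℝ) ((α + (g : ℤ)).toNat) x)
  else Phat α β M g x

/-- The renormalized exceptional Jacobi polynomial
`P̄_n^{α,β;M,F} = (∏_{i=0}^{-β-1} (M_i - 1)) · P_n^{α,β;M,F}`
(written so that the factors `M_i - 1` are distributed into the corresponding rows of the
determinant; this agrees with the product formula whenever all `M_i ≠ 1`). -/
def Pbar (α β : ℤ) (M : ℕ → ℝ) (F : Finset ℕ) (n : ℕ) (x : ℝ) : ℝ :=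
  (∏ i ∈ (Finset.range (-β).toNat).filter
      (fun i : ℕ => (((i : ℤ) - α).toNat ∉ F ∧ ((i : ℤ) - α).toNat ≠ n - uF F)), (M i - 1)) *
    Matrix.det (Matrix.of fun r j : Fin (F.card + 1) =>
      Fin.cases (iteratedDeriv (j : ℕ) (PhatBarRow α β M (n - uF F)) x)
        (fun k => iteratedDeriv (j : ℕ) (PhatBarRow α β M (elemOf F k)) x) r)

end ExceptionalHahnJacobi

/-!
At `a = α`, `b = β` the `j`-th summand of `h_f^{a,b,N}` contains the two Pochhammer symbols
`(a+b+f+1)_j` and `(a+j+1)_{f-j}` starting at nonpositive integers. The first vanishes for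
`j ≥ -α-β-f`, the second for `j ≤ -α-1`. In the middle range these two conditions cover every `j`,
so the limit is the derivative at `s = 0`, and by the product rule only two blocks of summands
contribute: those with `j ≤ -α-β-f-1`, where the second symbol is differentiated, and those with
`j ≥ -α`, where the first one is. Each block is, summand by summand, a multiple of one of the two
Hahn polynomials in the definition of `Ĥ_f`.
-/

section Pochhammer

open Polynomial

theorem poch_eq_eval_ascPochhammer (z : ℝ) (m : ℕ) : poch z m = (ascPochhammer ℝ m).eval z := by
  induction m with
  | zero => simp [poch]
  | succ m ih => rw [ascPochhammer_succ_eval, ← ih, poch, prod_range_succ, ← poch]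

theorem differentiable_poch (m : ℕ) : Differentiable ℝ fun z => poch z m := by
  simpa only [poch_eq_eval_ascPochhammer] using (ascPochhammer ℝ m).differentiable

theorem poch_add (z : ℝ) (m n : ℕ) : poch z (m + n) = poch z m * poch (z + m) n := by
  simp only [poch_eq_eval_ascPochhammer, ← ascPochhammer_mul, eval_mul, eval_comp, eval_add,
    eval_X, eval_natCast]

theorem poch_natCast_add_one (n m : ℕ) :
    poch (n + 1) m = ((n + m).factorial : ℝ) / n.factorial := by
  rw [eq_div_iff (by positivity), mul_comm, poch_eq_eval_ascPochhammer]
  exact_mod_cast factorial_mul_ascPochhammer ℝ n m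

theorem poch_one_left (m : ℕ) : poch 1 m = m.factorial := by
  rw [poch_eq_eval_ascPochhammer, ascPochhammer_eval_one]

theorem poch_neg_natCast_add (n m : ℕ) :
    poch (-((n : ℝ) + m)) m = (-1) ^ m * ((n + m).factorial : ℝ) / n.factorial := by
  have hfact : (n.factorial : ℝ) * (n + m).descFactorial m = (n + m).factorial := by
    exact_mod_cast Nat.add_sub_cancel n m ▸ Nat.factorial_mul_descFactorial (Nat.le_add_left m n)
  rw [poch_eq_eval_ascPochhammer, ascPochhammer_eval_neg_eq_descPochhammer, ← Nat.cast_add,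
    descPochhammer_eval_eq_descFactorial, ← hfact]
  field_simp

theorem poch_neg_natCast_self (m : ℕ) : poch (-(m : ℝ)) m = (-1) ^ m * m.factorial := by
  simpa using poch_neg_natCast_add 0 m

theorem poch_intCast_eq_zero {z : ℤ} {m : ℕ} (hz : z ≤ 0) (hzm : 0 < z + m) : poch z m = 0 := by
  obtain ⟨k, rfl⟩ := Int.exists_eq_neg_ofNat hz
  rw [poch_eq_eval_ascPochhammer, Int.cast_neg, Int.cast_natCast,
    ascPochhammer_eval_neg_coe_nat_of_lt (by omega)]

theorem deriv_poch_neg_natCast (k i : ℕ) :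
    deriv (fun z => poch z (k + 1 + i)) (-(k : ℝ)) = (-1) ^ k * k.factorial * i.factorial := by
  have hfactor : (fun z => poch z (k + 1 + i)) =
      fun z => (z + k) * (poch z k * poch (z + (k + 1)) i) := by
    funext z
    rw [poch_add, poch_add, show poch (z + k) 1 = z + k by simp [poch]]
    push_cast
    ring
  have hlinear : HasDerivAt (fun z : ℝ => z + k) 1 (-(k : ℝ)) := (hasDerivAt_id _).add_const _
  have hcofactor : DifferentiableAt ℝ (fun z => poch z k * poch (z + (k + 1)) i) (-(k : ℝ)) :=
    (differentiable_poch k _).mul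
      ((differentiable_poch i).comp (differentiable_id.add_const _) _)
  rw [hfactor, (hlinear.fun_mul hcofactor.hasDerivAt).deriv, neg_add_cancel, zero_mul, add_zero,
    neg_add_cancel_left, one_mul, poch_neg_natCast_self, poch_one_left]

theorem hasDerivAt_poch_comp_linear (z c : ℝ) (m : ℕ) :
    HasDerivAt (fun s => poch (z + c * s) m) (c * deriv (fun y => poch y m) z) 0 := by
  have hinner : HasDerivAt (fun s : ℝ => z + c * s) c 0 := by
    simpa using ((hasDerivAt_id (0 : ℝ)).const_mul c).const_add z
  have houter := (differentiable_poch m z).hasDerivAt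
  rw [mul_comm]
  exact HasDerivAt.comp_of_eq 0 houter hinner (by simp)

end Pochhammer

section Hahn

/-- The part of the `j`-th summand of the Hahn polynomial `h_n^{a,b,N}(x)` that does not depend on
the parameters `a` and `b`. -/
noncomputable def hahnWeight (N : ℝ) (n : ℕ) (x : ℝ) (j : ℕ) : ℝ :=
  poch (-(n : ℝ)) j * poch (-N + j) (n - j) * poch (-x) j / j.factorial

theorem hahn_eq_sum_hahnWeight_mul (a b N : ℝ) (n : ℕ) (x : ℝ) :
    hahn a b N n x = ∑ j ∈ range (n + 1),
      hahnWeight N n x j * (poch (a + b + n + 1) j * poch (a + j + 1) (n - j)) :=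
  sum_congr rfl fun j _ => by rw [hahnWeight]; ring

theorem hasDerivAt_hahn_comp_linear (a b p q N : ℝ) (n : ℕ) (x : ℝ) :
    HasDerivAt (fun s => hahn (a + p * s) (b + q * s) N n x)
      ((p + q) * ∑ j ∈ range (n + 1), hahnWeight N n x j *
          (deriv (fun z => poch z j) (a + b + n + 1) * poch (a + j + 1) (n - j)) +
        p * ∑ j ∈ range (n + 1), hahnWeight N n x j *
          (poch (a + b + n + 1) j * deriv (fun z => poch z (n - j)) (a + j + 1))) 0 := by
  have hexpand : (fun s => hahn (a + p * s) (b + q * s) N n x) = fun s => ∑ j ∈ range (n + 1),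
      hahnWeight N n x j *
        (poch (a + b + n + 1 + (p + q) * s) j * poch (a + j + 1 + p * s) (n - j)) := by
    funext s
    rw [hahn_eq_sum_hahnWeight_mul]
    exact sum_congr rfl fun j _ => by ring_nf
  have hterm (j : ℕ) := ((hasDerivAt_poch_comp_linear (a + b + n + 1) (p + q) j).fun_mul
    (hasDerivAt_poch_comp_linear (a + j + 1) p (n - j))).const_mul (hahnWeight N n x j)
  rw [hexpand]
  refine (HasDerivAt.fun_sum fun j _ => hterm j).congr_deriv ?_
  simp only [mul_sum, ← sum_add_distrib, mul_zero, add_zero]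
  exact sum_congr rfl fun j _ => by ring

theorem hahn_intCast_eq_zero {α β : ℤ} {f : ℕ} (hfα : -α ≤ f) (hfβ : -β ≤ f)
    (hf : f ≤ -α - β - 1) (N x : ℝ) : hahn α β N f x = 0 := by
  rw [hahn_eq_sum_hahnWeight_mul]
  refine sum_eq_zero fun j hj => ?_
  have hjf : j ≤ f := mem_range_succ_iff.1 hj
  rcases lt_or_ge (j : ℤ) (-α) with hjα | hjα
  · have hvanish : poch ((α : ℝ) + j + 1) (f - j) = 0 := by
      exact_mod_cast poch_intCast_eq_zero (z := α + j + 1) (by omega) (by omega)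
    rw [hvanish, mul_zero, mul_zero]
  · have hvanish : poch ((α : ℝ) + β + f + 1) j = 0 := by
      exact_mod_cast poch_intCast_eq_zero (z := α + β + f + 1) (by omega) (by omega)
    rw [hvanish, zero_mul, mul_zero]

-- In terms of the integers `α, β, f`: `k = -α-β-f-1`, `r = f+β` and `m = f+α`.
variable (k r m : ℕ) (N x : ℝ)

theorem hahnWeight_mul_poch_mul_deriv_poch (j l : ℕ) :
    hahnWeight N (j + l + r + 1 + m) x j *
        (poch (-((j + l : ℕ) : ℝ)) j *
          deriv (fun z => poch z (l + r + 1 + m)) (-((l + r : ℕ) : ℝ))) =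
      (-1) ^ r * r.factorial * m.factorial * poch (-N + (j + l : ℕ)) (r + 1 + m) *
        (hahnWeight N (j + l) x j *
          (poch (-((j + l + r + 1 + m : ℕ) : ℝ)) j * poch (-((l + r : ℕ) : ℝ)) l)) := by
  have hsplit : poch (-N + j) (l + r + 1 + m) =
      poch (-N + j) l * poch (-N + (j + l : ℕ)) (r + 1 + m) := by
    rw [show l + r + 1 + m = l + (r + 1 + m) by ring, poch_add]
    push_cast
    ring_nf
  rw [hahnWeight, hahnWeight, show j + l + r + 1 + m - j = l + r + 1 + m by omega,
    Nat.add_sub_cancel_left, hsplit, deriv_poch_neg_natCast, Nat.add_comm l r, Nat.cast_add r l,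
    poch_neg_natCast_add, pow_add]
  field_simp

theorem sum_hahnWeight_mul_poch_mul_deriv_poch :
    ∑ j ∈ range (k + r + 1 + m + 1), hahnWeight N (k + r + 1 + m) x j *
        (poch (-(k : ℝ)) j *
          deriv (fun z => poch z (k + r + 1 + m - j)) (-((k : ℝ) + r + 1) + j + 1)) =
      (-1) ^ r * r.factorial * m.factorial * poch (-N + k) (r + 1 + m) *
        hahn (-((k : ℝ) + r + 1)) (-((m : ℝ) + k + 1)) N k x := by
  rw [show k + r + 1 + m + 1 = (k + 1) + (r + 1 + m) by ring, sum_range_add]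
  have htail : ∑ i ∈ range (r + 1 + m), hahnWeight N (k + r + 1 + m) x (k + 1 + i) *
      (poch (-(k : ℝ)) (k + 1 + i) * deriv (fun z => poch z (k + r + 1 + m - (k + 1 + i)))
        (-((k : ℝ) + r + 1) + (k + 1 + i : ℕ) + 1)) = 0 :=
    sum_eq_zero fun i _ => by
      have hvanish : poch (-(k : ℝ)) (k + 1 + i) = 0 := by
        exact_mod_cast poch_intCast_eq_zero (z := -k) (by omega) (by omega)
      rw [hvanish, zero_mul, mul_zero]
  rw [htail, add_zero, hahn_eq_sum_hahnWeight_mul, mul_sum]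
  refine sum_congr rfl fun j hj => ?_
  obtain ⟨l, rfl⟩ := Nat.exists_eq_add_of_le (mem_range_succ_iff.1 hj)
  have hstart : -(((j + l : ℕ) : ℝ) + r + 1) + j + 1 = -((l + r : ℕ) : ℝ) := by
    push_cast
    ring
  have hstart_sum : -(((j + l : ℕ) : ℝ) + r + 1) + -((m : ℝ) + (j + l : ℕ) + 1) + (j + l : ℕ) + 1 =
      -((j + l + r + 1 + m : ℕ) : ℝ) := by
    push_cast
    ring
  rw [hstart, hstart_sum, show j + l + r + 1 + m - j = l + r + 1 + m by omega,
    Nat.add_sub_cancel_left]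
  exact hahnWeight_mul_poch_mul_deriv_poch r m N x j l

theorem hahnWeight_mul_deriv_poch_mul_poch (i l : ℕ) :
    hahnWeight N (k + r + 1 + (i + l)) x (k + r + 1 + i) *
        (deriv (fun z => poch z (k + r + 1 + i)) (-(k : ℝ)) * poch ((i : ℝ) + 1) l) =
      -((-1) ^ r * r.factorial * k.factorial * poch (-x) (k + r + 1)) *
        (hahnWeight (N - (k + r + 1 : ℕ)) (i + l) (x - (k + r + 1 : ℕ)) i *
          (poch ((r : ℝ) + 1) i * poch ((k + r + 1 + i : ℕ) + 1) l)) := by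
  have hdegree : poch (-((k + r + 1 + (i + l) : ℕ) : ℝ)) (k + r + 1 + i) =
      (-1) ^ (k + r + 1 + i) * ((k + r + 1 + i + l).factorial : ℝ) / l.factorial := by
    convert poch_neg_natCast_add l (k + r + 1 + i) using 3
    · push_cast
      ring
    · rw [Nat.add_comm]
  have hdegree_shifted : poch (-((i + l : ℕ) : ℝ)) i =
      (-1) ^ i * ((i + l).factorial : ℝ) / l.factorial := by
    rw [Nat.add_comm i l, Nat.cast_add, poch_neg_natCast_add]
  have hvariable : poch (-x) (k + r + 1 + i) =
      poch (-x) (k + r + 1) * poch (-(x - (k + r + 1 : ℕ))) i := by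
    rw [poch_add, neg_sub']
    ring_nf
  have hderiv : deriv (fun z => poch z (k + r + 1 + i)) (-(k : ℝ)) =
      (-1) ^ k * k.factorial * (r + i).factorial := by
    rw [← deriv_poch_neg_natCast, show k + 1 + (r + i) = k + r + 1 + i by ring]
  have hshift : -(N - (k + r + 1 : ℕ)) + i = -N + (k + r + 1 + i : ℕ) := by
    push_cast
    ring
  have hsign : ((-1 : ℝ) ^ k) ^ 2 = 1 := by rw [← pow_mul, mul_comm, pow_mul]; simp
  rw [hahnWeight, hahnWeight, show k + r + 1 + (i + l) - (k + r + 1 + i) = l by omega,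
    Nat.add_sub_cancel_left, hdegree, hdegree_shifted, hvariable, hshift, hderiv,
    poch_natCast_add_one, poch_natCast_add_one, poch_natCast_add_one]
  simp only [pow_add, pow_one]
  field_simp
  rw [hsign]
  ring

theorem sum_hahnWeight_mul_deriv_poch_mul_poch :
    ∑ j ∈ range (k + r + 1 + m + 1), hahnWeight N (k + r + 1 + m) x j *
        (deriv (fun z => poch z j) (-(k : ℝ)) *
          poch (-((k : ℝ) + r + 1) + j + 1) (k + r + 1 + m - j)) =
      -((-1) ^ r * r.factorial * k.factorial * poch (-x) (k + r + 1)) *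
        hahn ((k : ℝ) + r + 1) (-((m : ℝ) + k + 1)) (N - (k + r + 1 : ℕ)) m
          (x - (k + r + 1 : ℕ)) := by
  rw [Nat.add_assoc (k + r + 1), sum_range_add]
  have hhead : ∑ j ∈ range (k + r + 1), hahnWeight N (k + r + 1 + m) x j *
      (deriv (fun z => poch z j) (-(k : ℝ)) *
        poch (-((k : ℝ) + r + 1) + j + 1) (k + r + 1 + m - j)) = 0 := by
    refine sum_eq_zero fun j hj => ?_
    have hj' : j < k + r + 1 := mem_range.1 hj
    have hvanish : poch (-((k : ℝ) + r + 1) + j + 1) (k + r + 1 + m - j) = 0 := by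
      exact_mod_cast poch_intCast_eq_zero (z := -(k + r + 1) + j + 1) (by omega) (by omega)
    rw [hvanish, mul_zero, mul_zero]
  rw [hhead, zero_add, hahn_eq_sum_hahnWeight_mul, mul_sum]
  refine sum_congr rfl fun i hi => ?_
  obtain ⟨l, rfl⟩ := Nat.exists_eq_add_of_le (mem_range_succ_iff.1 hi)
  have hstart : -((k : ℝ) + r + 1) + (k + r + 1 + i : ℕ) + 1 = i + 1 := by
    push_cast
    ring
  have hstart_sum : (k : ℝ) + r + 1 + -((i + l : ℕ) + (k : ℝ) + 1) + (i + l : ℕ) + 1 = r + 1 := by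
    push_cast
    ring
  have hstart_shifted : (k : ℝ) + r + 1 + i + 1 = (k + r + 1 + i : ℕ) + 1 := by push_cast; ring
  rw [hstart, hstart_sum, hstart_shifted, show k + r + 1 + (i + l) - (k + r + 1 + i) = l by omega,
    Nat.add_sub_cancel_left]
  exact hahnWeight_mul_deriv_poch_mul_poch k r N x i l

theorem hasDerivAt_hahn_neg_natCast (p q : ℝ) :
    HasDerivAt (fun s => hahn (-((k : ℝ) + r + 1) + p * s) (-((m : ℝ) + k + 1) + q * s) N
        (k + r + 1 + m) x)
      ((-1) ^ r * r.factorial *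
        (p * (m.factorial * poch (-N + k) (r + 1 + m) *
            hahn (-((k : ℝ) + r + 1)) (-((m : ℝ) + k + 1)) N k x) -
          (p + q) * (k.factorial * poch (-x) (k + r + 1) *
            hahn ((k : ℝ) + r + 1) (-((m : ℝ) + k + 1)) (N - (k + r + 1 : ℕ)) m
              (x - (k + r + 1 : ℕ))))) 0 := by
  have hstart : -((k : ℝ) + r + 1) + -((m : ℝ) + k + 1) + (k + r + 1 + m : ℕ) + 1 = -k := by
    push_cast
    ring
  have hderiv := hasDerivAt_hahn_comp_linear (-((k : ℝ) + r + 1)) (-((m : ℝ) + k + 1)) p q N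
    (k + r + 1 + m) x
  rw [hstart, sum_hahnWeight_mul_deriv_poch_mul_poch,
    sum_hahnWeight_mul_poch_mul_deriv_poch] at hderiv
  exact hderiv.congr_deriv (by ring)

end Hahn

theorem Hhat_neg_natCast (k r m : ℕ) (N : ℝ) (M : ℕ → ℝ) (x : ℝ) :
    Hhat (-((k + r + 1 : ℕ) : ℤ)) (-((m + k + 1 : ℕ) : ℤ)) N M (k + r + 1 + m) x =
      (-1) ^ r * r.factorial *
        (k.factorial * poch (-x) (k + r + 1) *
            hahn ((k : ℝ) + r + 1) (-((m : ℝ) + k + 1)) (N - (k + r + 1 : ℕ)) m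
              (x - (k + r + 1 : ℕ)) +
          m.factorial * poch (-N + k) (r + 1 + m) / (M m - 1) *
            hahn (-((k : ℝ) + r + 1)) (-((m : ℝ) + k + 1)) N k x) := by
  have hexponent : (2 * ((k + r + 1 + m : ℕ) : ℤ) + -((k + r + 1 : ℕ) : ℤ) +
      -((m + k + 1 : ℕ) : ℤ) + 1).toNat = r + 1 + m := by omega
  have hbase : -N - (-((k + r + 1 : ℕ) : ℤ) : ℤ) - (-((m + k + 1 : ℕ) : ℤ) : ℤ) -
      ((k + r + 1 + m : ℕ) : ℝ) - 1 = -N + k := by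
    push_cast
    ring
  rw [Hhat, if_neg (by omega), if_pos (by omega), hexponent, hbase,
    show -((k + r + 1 : ℕ) : ℤ) + ((k + r + 1 + m : ℕ) : ℤ) = m by omega,
    show -((m + k + 1 : ℕ) : ℤ) + ((k + r + 1 + m : ℕ) : ℤ) = r by omega,
    show - -((k + r + 1 : ℕ) : ℤ) - -((m + k + 1 : ℕ) : ℤ) - ((k + r + 1 + m : ℕ) : ℤ) - 1 = k by
      omega]
  simp only [neg_neg, Int.toNat_natCast, zpow_natCast]
  push_cast
  ring_nf

theorem hasDerivAt_hahn_Hhat (α β : ℤ) (N : ℝ) (M : ℕ → ℝ) (f : ℕ)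
    (hM0 : M (α + f).toNat ≠ 0) (hM1 : M (α + f).toNat ≠ 1)
    (hfα : -α ≤ f) (hfβ : -β ≤ f) (hf : f ≤ -α - β - 1) (x : ℝ) :
    HasDerivAt (fun s : ℝ => hahn (α + s / M (α + f).toNat) (β - s) N f x)
      ((M (α + f).toNat - 1) / M (α + f).toNat * Hhat α β N M f x) 0 := by
  obtain ⟨m, hm⟩ := Int.eq_ofNat_of_zero_le (show 0 ≤ α + f by omega)
  obtain ⟨k, hk⟩ := Int.eq_ofNat_of_zero_le (show 0 ≤ -α - β - 1 - f by omega)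
  obtain ⟨r, hr⟩ := Int.eq_ofNat_of_zero_le (show 0 ≤ β + f by omega)
  obtain rfl : f = k + r + 1 + m := by omega
  obtain rfl : α = -((k + r + 1 : ℕ) : ℤ) := by omega
  obtain rfl : β = -((m + k + 1 : ℕ) : ℤ) := by omega
  rw [hm, Int.toNat_natCast] at hM0 hM1 ⊢
  have hM1' : M m - 1 ≠ 0 := sub_ne_zero.2 hM1
  rw [Hhat_neg_natCast]
  convert hasDerivAt_hahn_neg_natCast k r m N x (M m)⁻¹ (-1) using 1
  · funext s
    push_cast
    ring_nf
  · field_simp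
    ring

theorem Hhat_middle_as_limit_general (α β : ℤ) (N : ℝ) (M : ℕ → ℝ) (f : ℕ)
    (hM0 : M (α + f).toNat ≠ 0) (hM1 : M (α + f).toNat ≠ 1)
    (hfα : -α ≤ f) (hfβ : -β ≤ f) (hf : f ≤ -α - β - 1) (x : ℝ) :
    Filter.Tendsto (fun s : ℝ => s⁻¹ * hahn (α + s / M (α + f).toNat) (β - s) N f x)
      (nhdsWithin 0 {s : ℝ | s ≠ 0})
      (nhds ((M (α + f).toNat - 1) / M (α + f).toNat * Hhat α β N M f x)) := by
  simpa [hahn_intCast_eq_zero hfα hfβ hf, Set.compl_def] using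
    (hasDerivAt_hahn_Hhat α β N M f hM0 hM1 hfα hfβ hf x).tendsto_slope_zero

/-- `Ĥ_f^{α,β,N;M}` as a limit of Hahn polynomials (middle range). -/
theorem Hhat_middle_as_limit
    (α β : ℤ) (N : ℝ) (M : ℕ → ℝ)
    (hαβ : α ≤ β) (hβ : β ≤ -1)
    (hN : ∀ k : ℕ, N ≠ -(k : ℝ))
    (hM : ∀ i, M i ≠ 0 ∧ M i ≠ 1)
    (f : ℕ) (hf1 : -α ≤ (f : ℤ)) (hf2 : (f : ℤ) ≤ -α - β - 1) (x : ℝ) :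
    Filter.Tendsto
      (fun s : ℝ => s⁻¹ * hahn ((α : ℝ) + s / M ((α + (f : ℤ)).toNat)) ((β : ℝ) - s) N f x)
      (nhdsWithin 0 {s : ℝ | s ≠ 0})
      (nhds ((M ((α + (f : ℤ)).toNat) - 1) / M ((α + (f : ℤ)).toNat) * Hhat α β N M f x)) := by
  exact Hhat_middle_as_limit_general α β N M f (hM _).1 (hM _).2 hf1 (by omega) hf2 x
end

section
/- Let α ≤ β ≤ −1 be negative integers and let M = (M_i)_{i≥0} be real parameters with M_i ∉ {0,1}. Then for every integer f with −α ≤ f ≤ −α−β−1, the limit lim_{s→0} (1/s)·P_f^{α+s/M_{α+f}, β−s}(x) exists for every x, and P̂_f^{α,β;M}(x) = (M_{α+f}/(M_{α+f}−1)) · lim_{s→0} (1/s)·P_f^{α+s/M_{α+f}, β−s}(x). -/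
open Finset MeasureTheory

/-!
Write `y = (x - 1) / 2`. Vandermonde's identity gives
`P_n^{a,b}(x) = ∑ k, C(n + a, n - k) C(n + a + b + k, k) y ^ k`. At `a = α`, `b = β`, put
`A = n + α`, `B = n + β` and `m = -α - β - n - 1`, so that `n = A + B + m + 1`. The first binomial
then vanishes exactly for `k ≤ B + m` and the second exactly for `k ≥ m + 1`; in particular every
term is zero and the limit is the derivative along the line `s ↦ (α + u s, β + v s)`. Only terms
with a single vanishing factor contribute to it: those with `k ≤ m` add up to a multiple of
`P_m^{α,β}`, those with `k ≥ B + m + 1 = -α` to a multiple of `y ^ (-α) P_A^{-α,β}`. The theorem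
is the case `u = 1 / M_A`, `v = -1`.
-/

open scoped Nat

theorem sum_antidiagonal_antidiagonal_assoc {ι R : Type*} [AddCommMonoid ι] [HasAntidiagonal ι]
    [AddCommMonoid R] (F : ι → ι → ι → R) (n : ι) :
    ∑ ij ∈ antidiagonal n, ∑ kl ∈ antidiagonal ij.1, F kl.1 kl.2 ij.2 =
      ∑ ij ∈ antidiagonal n, ∑ kl ∈ antidiagonal ij.2, F ij.1 kl.1 kl.2 := by
  simp only [sum_sigma']
  refine sum_nbij' (fun ⟨⟨_, j⟩, ⟨k, l⟩⟩ ↦ ⟨(k, l + j), (l, j)⟩)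
    (fun ⟨⟨i, _⟩, ⟨k, l⟩⟩ ↦ ⟨(i + k, l), (i, k)⟩) ?_ ?_ ?_ ?_ ?_ <;>
    grind [HasAntidiagonal.mem_antidiagonal]

theorem genBinom_eq_ringChoose (z : ℝ) (k : ℕ) : genBinom z k = Ring.choose z k := by
  have hprod : (descPochhammer ℤ k).smeval z = ∏ i ∈ range k, (z - i) := by
    rw [← descPochhammer_eval_eq_prod_range, Polynomial.descPochhammer_smeval_eq_ascPochhammer,
      descPochhammer_eval_eq_ascPochhammer, Polynomial.ascPochhammer_smeval_eq_eval]
  rw [Ring.choose_eq_smul, hprod, genBinom, div_eq_inv_mul, smul_eq_mul]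

theorem genBinom_natCast (N k : ℕ) : genBinom N k = N.choose k := by
  rw [genBinom_eq_ringChoose, Ring.choose_natCast]

theorem genBinom_natCast_eq_zero {N k : ℕ} (h : N < k) : genBinom N k = 0 := by
  rw [genBinom_natCast, Nat.choose_eq_zero_of_lt h, Nat.cast_zero]

theorem genBinom_natCast_add (N k : ℕ) : genBinom ((N : ℝ) + k) k = (N + k)! / (N ! * k !) := by
  rw [← Nat.cast_add, genBinom_natCast, ← Nat.choose_symm_add, Nat.cast_add_choose]

theorem genBinom_neg_natCast_sub_one (N k : ℕ) :
    genBinom (-(N : ℝ) - 1) k = (-1) ^ k * ((N + k)! / (N ! * k !)) := by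
  rw [← genBinom_natCast_add, genBinom_eq_ringChoose, genBinom_eq_ringChoose, ← neg_add',
    Ring.choose_neg, add_right_comm, add_sub_cancel_right, Units.smul_def, zsmul_eq_mul,
    Int.coe_negOnePow_natCast]
  push_cast
  rfl

theorem genBinom_mul_choose_add (z : ℝ) (k l : ℕ) :
    genBinom z (k + l) * (k + l).choose k = genBinom z k * genBinom (z - k) l := by
  simp only [genBinom_eq_ringChoose]
  rw [mul_comm, ← nsmul_eq_mul, Ring.choose_smul_choose z (Nat.le_add_right k l),
    Nat.add_sub_cancel_left]

theorem genBinom_add (z w : ℝ) (k : ℕ) :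
    genBinom (z + w) k = ∑ ij ∈ antidiagonal k, genBinom z ij.1 * genBinom w ij.2 := by
  simp only [genBinom_eq_ringChoose, Ring.add_choose_eq k (Commute.all z w)]

theorem genBinom_succ (z : ℝ) (k : ℕ) : genBinom z (k + 1) = genBinom z k * (z - k) / (k + 1) := by
  rw [genBinom, genBinom, prod_range_succ, Nat.factorial_succ]
  push_cast
  field_simp

theorem differentiable_genBinom (k : ℕ) : Differentiable ℝ (genBinom · k) := by
  unfold genBinom
  fun_prop

theorem deriv_genBinom_natCast (N i : ℕ) :
    deriv (genBinom · (N + 1 + i)) (N : ℝ) = (-1) ^ i * (N ! * i !) / (N + 1 + i)! := by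
  set g : ℝ → ℝ := fun z ↦
    genBinom z N * genBinom (z - (N + 1 : ℕ)) i / ((N + 1) * (N + 1 + i).choose (N + 1))
  have hchoose : ((N + 1 + i).choose (N + 1) : ℝ) ≠ 0 :=
    Nat.cast_ne_zero.mpr (Nat.choose_pos (Nat.le_add_right _ _)).ne'
  have hfactor : (genBinom · (N + 1 + i)) = fun z ↦ (z - N) * g z := by
    funext z
    rw [eq_div_of_mul_eq hchoose (genBinom_mul_choose_add z (N + 1) i), genBinom_succ]
    simp only [g]
    field_simp
  have hg : DifferentiableAt ℝ g N :=
    (((differentiable_genBinom N).mul ((differentiable_genBinom i).comp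
      (differentiable_id.sub_const _))).div_const _) _
  have hgN : g N = (-1) ^ i * (N ! * i !) / (N + 1 + i)! := by
    have hneg : (N : ℝ) - (N + 1 : ℕ) = -(0 : ℕ) - 1 := by push_cast; ring
    simp only [g]
    rw [genBinom_natCast, Nat.choose_self, hneg, genBinom_neg_natCast_sub_one,
      Nat.cast_add_choose, Nat.factorial_succ]
    push_cast
    simp only [zero_add, Nat.factorial_zero]
    field_simp
    simp
  have hderiv := ((hasDerivAt_id (N : ℝ)).sub_const (N : ℝ)).fun_mul hg.hasDerivAt
  rw [hfactor, ← hgN]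
  simpa using hderiv.deriv

theorem genBinom_mul_pow_mul_one_add_pow (z y : ℝ) (i j : ℕ) :
    genBinom z i * y ^ j * (1 + y) ^ i =
      ∑ kl ∈ antidiagonal i, genBinom z kl.1 * genBinom (z - kl.1) kl.2 * y ^ (kl.2 + j) := by
  rw [(Commute.all 1 y).add_pow', mul_sum]
  refine sum_congr rfl fun kl hkl ↦ ?_
  rw [← HasAntidiagonal.mem_antidiagonal.mp hkl, ← genBinom_mul_choose_add, nsmul_eq_mul, one_pow,
    pow_add]
  ring

theorem jacobiP_eq_sum_antidiagonal (a b : ℝ) (n : ℕ) (x : ℝ) :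
    jacobiP a b n x = ∑ ij ∈ antidiagonal n, genBinom (n + a) ij.1 * genBinom (n + b) ij.2 *
      ((x - 1) / 2) ^ ij.2 * (1 + (x - 1) / 2) ^ ij.1 := by
  rw [jacobiP, mul_sum, Nat.sum_antidiagonal_eq_sum_range_succ_mk]
  refine sum_congr rfl fun j hj ↦ ?_
  have hpow : (2 : ℝ)⁻¹ ^ n = 2⁻¹ ^ (n - j) * 2⁻¹ ^ j := by
    rw [← pow_add, Nat.sub_add_cancel (mem_range_succ_iff.mp hj)]
  rw [show 1 + (x - 1) / 2 = (x + 1) * 2⁻¹ by ring, div_eq_mul_inv, mul_pow, mul_pow, hpow]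
  ring

theorem jacobiP_eq_sum_pow (a b : ℝ) (n : ℕ) (x : ℝ) :
    jacobiP a b n x = ∑ k ∈ range (n + 1),
      genBinom (n + a) (n - k) * genBinom (n + a + b + k) k * ((x - 1) / 2) ^ k := by
  set y := (x - 1) / 2
  calc jacobiP a b n x
    _ = ∑ ij ∈ antidiagonal n, ∑ kl ∈ antidiagonal ij.1, genBinom (n + a) kl.1 *
          genBinom (n + a - kl.1) kl.2 * y ^ (kl.2 + ij.2) * genBinom (n + b) ij.2 := by
      rw [jacobiP_eq_sum_antidiagonal]
      refine sum_congr rfl fun ij _ ↦ ?_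
      rw [← sum_mul, ← genBinom_mul_pow_mul_one_add_pow]
      ring
    _ = ∑ ij ∈ antidiagonal n, ∑ kl ∈ antidiagonal ij.2, genBinom (n + a) ij.1 *
          genBinom (n + a - ij.1) kl.1 * y ^ (kl.1 + kl.2) * genBinom (n + b) kl.2 :=
      sum_antidiagonal_antidiagonal_assoc (fun p q r ↦ genBinom (n + a) p *
        genBinom (n + a - p) q * y ^ (q + r) * genBinom (n + b) r) n
    _ = ∑ ij ∈ antidiagonal n,
          genBinom (n + a) ij.1 * genBinom (n + a + b + ij.2) ij.2 * y ^ ij.2 := by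
      refine sum_congr rfl fun ij hij ↦ ?_
      have hcast : (ij.1 : ℝ) + ij.2 = n := mod_cast HasAntidiagonal.mem_antidiagonal.mp hij
      rw [show n + a + b + ij.2 = (n + a - ij.1) + (n + b) by linear_combination hcast,
        genBinom_add (n + a - ij.1), mul_sum, sum_mul]
      refine sum_congr rfl fun kl hkl ↦ ?_
      rw [HasAntidiagonal.mem_antidiagonal.mp hkl]
      ring
    _ = _ := by
      rw [← Nat.sum_antidiagonal_swap]
      exact Nat.sum_antidiagonal_eq_sum_range_succ_mk _ _

theorem jacobiP_eq_zero {a b : ℝ} {n A B : ℕ} (ha : n + a = A) (hb : n + b = B) (hn : A + B < n)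
    (x : ℝ) : jacobiP a b n x = 0 := by
  rw [jacobiP, sum_eq_zero, mul_zero]
  intro j _
  rw [ha, hb]
  rcases lt_or_ge A j with hj | hj
  · simp [genBinom_natCast_eq_zero hj]
  · simp [genBinom_natCast_eq_zero (show B < n - j by lia)]

theorem hasDerivAt_genBinom_line (z u : ℝ) (k : ℕ) :
    HasDerivAt (fun s ↦ genBinom (z + u * s) k) (u * deriv (genBinom · k) z) 0 := by
  have hline : HasDerivAt (fun s ↦ z + u * s) u 0 := by
    simpa using ((hasDerivAt_id (0 : ℝ)).const_mul u).const_add z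
  have houter : HasDerivAt (genBinom · k) (deriv (genBinom · k) z) (z + u * 0) := by
    simpa using (differentiable_genBinom k z).hasDerivAt
  simpa only [mul_comm u] using! houter.comp 0 hline

theorem hasDerivAt_jacobiP_line (a b u v : ℝ) (n : ℕ) (x : ℝ) :
    HasDerivAt (fun s ↦ jacobiP (a + u * s) (b + v * s) n x)
      (u * ∑ k ∈ range (n + 1), deriv (genBinom · (n - k)) (n + a) *
          genBinom (n + a + b + k) k * ((x - 1) / 2) ^ k +
        (u + v) * ∑ k ∈ range (n + 1), genBinom (n + a) (n - k) *
          deriv (genBinom · k) (n + a + b + k) * ((x - 1) / 2) ^ k) 0 := by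
  have hexpand : (fun s ↦ jacobiP (a + u * s) (b + v * s) n x) = fun s ↦
      ∑ k ∈ range (n + 1), genBinom (n + a + u * s) (n - k) *
        genBinom (n + a + b + k + (u + v) * s) k * ((x - 1) / 2) ^ k := by
    funext s
    rw [jacobiP_eq_sum_pow]
    refine sum_congr rfl fun k _ ↦ ?_
    congr 3 <;> ring
  rw [hexpand, mul_sum, mul_sum, ← sum_add_distrib]
  refine HasDerivAt.fun_sum fun k _ ↦ ?_
  refine (((hasDerivAt_genBinom_line (n + a) u (n - k)).fun_mul
    (hasDerivAt_genBinom_line (n + a + b + k) (u + v) k)).mul_const _).congr_deriv ?_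
  simp only [mul_zero, add_zero]
  ring

section NaturalParameters

variable {a b : ℝ} {n A B m : ℕ}

theorem sum_deriv_genBinom_mul_genBinom (ha : n + a = A) (hb : n + b = B)
    (hn : n = A + B + m + 1) (x : ℝ) :
    ∑ k ∈ range (n + 1), deriv (genBinom · (n - k)) (n + a) * genBinom (n + a + b + k) k *
        ((x - 1) / 2) ^ k =
      (-1) ^ B * (A ! * B ! * m !) / n ! * jacobiP a b m x := by
  have hcast : (n : ℝ) = A + B + m + 1 := mod_cast hn
  have hvanish (i : ℕ) : genBinom (n + a + b + (m + 1 + i : ℕ)) (m + 1 + i) = 0 := by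
    rw [show n + a + b + (m + 1 + i : ℕ) = (i : ℝ) by
      push_cast; linear_combination ha + hb - hcast]
    exact genBinom_natCast_eq_zero (by lia)
  rw [jacobiP_eq_sum_pow, mul_sum, show n + 1 = m + 1 + (A + B + 1) by lia, sum_range_add,
    sum_eq_zero (s := range (A + B + 1)) fun i _ ↦ by rw [hvanish, mul_zero, zero_mul], add_zero]
  refine sum_congr rfl fun k hk ↦ ?_
  obtain ⟨p, rfl⟩ := Nat.exists_eq_add_of_le (mem_range_succ_iff.mp hk)
  have hsum_n : n + a + b + k = -(p : ℝ) - 1 := by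
    push_cast at hcast; linear_combination ha + hb - hcast
  have ha_m : (k + p : ℕ) + a = -(B : ℝ) - 1 := by
    push_cast at hcast ⊢; linear_combination ha - hcast
  have hsum_m : (k + p : ℕ) + a + b + k = -((A + 1 + (B + p) : ℕ) : ℝ) - 1 := by
    push_cast at hcast ⊢; linear_combination ha + hb - 2 * hcast
  rw [hsum_m, ha_m, hsum_n, ha, show n - k = A + 1 + (B + p) by lia, Nat.add_sub_cancel_left,
    deriv_genBinom_natCast, genBinom_neg_natCast_sub_one, genBinom_neg_natCast_sub_one,
    genBinom_neg_natCast_sub_one, show A + 1 + (B + p) + k = n by lia, add_comm p k]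
  field_simp
  ring

theorem sum_genBinom_mul_deriv_genBinom (ha : n + a = A) (hb : n + b = B)
    (hn : n = A + B + m + 1) (x : ℝ) :
    ∑ k ∈ range (n + 1), genBinom (n + a) (n - k) * deriv (genBinom · k) (n + a + b + k) *
        ((x - 1) / 2) ^ k =
      -((-1) ^ B * (A ! * B ! * m !) / n ! *
        (((1 - x) / 2) ^ (B + m + 1) * jacobiP (-a) b A x)) := by
  have hcast : (n : ℝ) = A + B + m + 1 := mod_cast hn
  have hvanish {k : ℕ} (hk : k ∈ range (B + m + 1)) : genBinom (n + a) (n - k) = 0 := by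
    rw [ha]
    exact genBinom_natCast_eq_zero (by grind)
  have hsign : (-1 : ℝ) ^ m * ((x - 1) / 2) ^ (B + m + 1) =
      -((-1) ^ B * ((1 - x) / 2) ^ (B + m + 1)) := by
    rw [show (x - 1) / 2 = -1 * ((1 - x) / 2) by ring, mul_pow, pow_succ, pow_add]
    linear_combination -(-1) ^ B * ((1 - x) / 2) ^ (B + m + 1) *
      pow_mul_pow_eq_one m (show (-1 : ℝ) * -1 = 1 by norm_num)
  rw [jacobiP_eq_sum_pow, mul_sum, mul_sum, ← sum_neg_distrib,
    show n + 1 = B + m + 1 + (A + 1) by lia, sum_range_add,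
    sum_eq_zero fun k hk ↦ by rw [hvanish hk, zero_mul, zero_mul], zero_add]
  refine sum_congr rfl fun i hi ↦ ?_
  obtain ⟨p, rfl⟩ := Nat.exists_eq_add_of_le (mem_range_succ_iff.mp hi)
  have hsum_n : n + a + b + (B + m + 1 + i : ℕ) = ((B + i : ℕ) : ℝ) := by
    push_cast at ha hcast ⊢; linear_combination ha + hb - hcast
  have ha_A : (i + p : ℕ) + -a = (B + m + 1 + i : ℕ) + (p : ℝ) := by
    push_cast at ha hcast ⊢; linear_combination hcast - ha
  have hsum_A : (i + p : ℕ) + -a + b + i = (B : ℝ) + i := by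
    push_cast at ha ⊢; linear_combination hb - ha
  rw [hsum_A, ha_A, hsum_n, ha, show n - (B + m + 1 + i) = p by lia, Nat.add_sub_cancel_left,
    Nat.cast_add, genBinom_natCast_add, genBinom_natCast_add, genBinom_natCast_add,
    show B + m + 1 + i = B + i + 1 + m by lia, deriv_genBinom_natCast,
    show B + i + 1 + m + p = n by lia, show B + i + 1 + m = B + m + 1 + i by lia, pow_add]
  field_simp
  linear_combination ((x - 1) / 2) ^ i * hsign

theorem hasDerivAt_jacobiP_line_of_natCast (ha : n + a = A) (hb : n + b = B)
    (hn : n = A + B + m + 1) (u v x : ℝ) :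
    HasDerivAt (fun s ↦ jacobiP (a + u * s) (b + v * s) n x)
      ((-1) ^ B * (A ! * B ! * m !) / n ! *
        (u * jacobiP a b m x -
          (u + v) * (((1 - x) / 2) ^ (B + m + 1) * jacobiP (-a) b A x))) 0 := by
  refine (hasDerivAt_jacobiP_line a b u v n x).congr_deriv ?_
  rw [sum_deriv_genBinom_mul_genBinom ha hb hn, sum_genBinom_mul_deriv_genBinom ha hb hn]
  ring

theorem tendsto_inv_mul_jacobiP_line_of_natCast (ha : n + a = A) (hb : n + b = B)
    (hn : n = A + B + m + 1) (u v x : ℝ) :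
    Filter.Tendsto (fun s ↦ s⁻¹ * jacobiP (a + u * s) (b + v * s) n x) (nhdsWithin 0 {0}ᶜ)
      (nhds ((-1) ^ B * (A ! * B ! * m !) / n ! *
        (u * jacobiP a b m x -
          (u + v) * (((1 - x) / 2) ^ (B + m + 1) * jacobiP (-a) b A x)))) := by
  simpa [jacobiP_eq_zero ha hb (show A + B < n by lia)] using
    hasDerivAt_iff_tendsto_slope_zero.mp (hasDerivAt_jacobiP_line_of_natCast ha hb hn u v x)

end NaturalParameters

theorem Phat_eq_of_middle {α β : ℤ} {n A B m : ℕ} (hA : α + n = A) (hB : β + n = B)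
    (hn : n = A + B + m + 1) (M : ℕ → ℝ) (x : ℝ) :
    Phat α β M n x = (-1) ^ B * (A ! * B ! * m !) / n ! *
      ((M A - 1)⁻¹ * jacobiP α β m x +
        ((1 - x) / 2) ^ (B + m + 1) * jacobiP (-α) β A x) := by
  rw [Phat, if_neg (by lia), if_pos (by lia), add_comm (n : ℤ) α, add_comm (n : ℤ) β,
    show (-α).toNat = B + m + 1 by lia, show (-α - β - n - 1).toNat = m by lia, hA, hB,
    Int.toNat_natCast, Int.toNat_natCast, zpow_natCast]

/-- `P̂_f^{α,β;M}` as a limit of Jacobi polynomials (middle range). -/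
theorem Phat_middle_as_limit
    (α β : ℤ) (M : ℕ → ℝ)
    (hαβ : α ≤ β) (hβ : β ≤ -1)
    (hM : ∀ i, M i ≠ 0 ∧ M i ≠ 1)
    (f : ℕ) (hf1 : -α ≤ (f : ℤ)) (hf2 : (f : ℤ) ≤ -α - β - 1) (x : ℝ) :
    Filter.Tendsto
      (fun s : ℝ => s⁻¹ * jacobiP ((α : ℝ) + s / M ((α + (f : ℤ)).toNat)) ((β : ℝ) - s) f x)
      (nhdsWithin 0 {s : ℝ | s ≠ 0})
      (nhds ((M ((α + (f : ℤ)).toNat) - 1) / M ((α + (f : ℤ)).toNat) * Phat α β M f x)) := by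
  obtain ⟨A, hA⟩ := Int.eq_ofNat_of_zero_le (show 0 ≤ α + f by lia)
  obtain ⟨B, hB⟩ := Int.eq_ofNat_of_zero_le (show 0 ≤ β + f by lia)
  obtain ⟨m, hm⟩ := Int.eq_ofNat_of_zero_le (show 0 ≤ -α - β - f - 1 by lia)
  have hf : f = A + B + m + 1 := by lia
  have ha : (f : ℝ) + α = A := by rw [add_comm]; exact_mod_cast hA
  have hb : (f : ℝ) + β = B := by rw [add_comm]; exact_mod_cast hB
  have hM0 : M A ≠ 0 := (hM A).1
  have hM1 : M A - 1 ≠ 0 := sub_ne_zero.mpr (hM A).2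
  have hlim := tendsto_inv_mul_jacobiP_line_of_natCast ha hb hf (M A)⁻¹ (-1) x
  rw [hA, Int.toNat_natCast, Phat_eq_of_middle hA hB hf]
  convert hlim using 2
  · rw [div_eq_inv_mul, neg_one_mul, ← sub_eq_add_neg]
  · rfl
  · field_simp
    ring
end
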